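/- The elements c₁ := tr_q(A) = a¹₁ + q⁻²a²₂, c₂ := det_q(A), d₁ := tr_q(D) = ∂¹₁ + q⁻²∂²₂, d₂ := det_q(D), r := q²·tr_q(DA) and w := tr_q(DÃD̃A) of 𝒟q(GL₂), with c₂ and d₂ invertible there, satisfy all sixteen defining relations of ℬ; consequently there is a ℂ-algebra homomorphism Ψ̄: ℬ → 𝒟q(GL₂) sending the generators c₁, c₂, d₁, d₂, r, w to these elements. -/

import Mathlib

noncomputable section

/-- Generators `a¹₁, a¹₂, a²₁, a²₂, ∂¹₁, ∂¹₂, ∂²₁, ∂²₂` of the algebra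
`𝒟q⁺(GL₂)` of quantum differential operators. -/
inductive QLGen : Type
  | a11 | a12 | a21 | a22 | p11 | p12 | p21 | p22 | ai | di

abbrev FQL : Type := FreeAlgebra ℂ QLGen

def gQL : QLGen → FQL := FreeAlgebra.ι ℂ

/-- The defining relations of `𝒟q⁺(GL₂)`. -/
inductive QLRel (q : ℂ) : FQL → FQL → Prop
  -- the six `a`-relations
  | a1 : QLRel q (gQL .a12 * gQL .a11)
      (gQL .a11 * gQL .a12 + (1 - q⁻¹ ^ 2) • (gQL .a12 * gQL .a22))
  | a2 : QLRel q (gQL .a22 * gQL .a11) (gQL .a11 * gQL .a22)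
  | a3 : QLRel q (gQL .a21 * gQL .a11)
      (gQL .a11 * gQL .a21 - (1 - q⁻¹ ^ 2) • (gQL .a22 * gQL .a21))
  | a4 : QLRel q (gQL .a22 * gQL .a12) ((q ^ 2) • (gQL .a12 * gQL .a22))
  | a5 : QLRel q (gQL .a21 * gQL .a12)
      (gQL .a12 * gQL .a21 + (1 - q⁻¹ ^ 2) • (gQL .a11 * gQL .a22 - gQL .a22 * gQL .a22))
  | a6 : QLRel q (gQL .a22 * gQL .a21) ((q⁻¹ ^ 2) • (gQL .a21 * gQL .a22))
  -- the six `∂`-relations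
  | p1 : QLRel q (gQL .p12 * gQL .p11)
      (gQL .p11 * gQL .p12 + (1 - q⁻¹ ^ 2) • (gQL .p12 * gQL .p22))
  | p2 : QLRel q (gQL .p22 * gQL .p11) (gQL .p11 * gQL .p22)
  | p3 : QLRel q (gQL .p21 * gQL .p11)
      (gQL .p11 * gQL .p21 - (1 - q⁻¹ ^ 2) • (gQL .p22 * gQL .p21))
  | p4 : QLRel q (gQL .p22 * gQL .p12) ((q ^ 2) • (gQL .p12 * gQL .p22))
  | p5 : QLRel q (gQL .p21 * gQL .p12)
      (gQL .p12 * gQL .p21 + (1 - q⁻¹ ^ 2) • (gQL .p11 * gQL .p22 - gQL .p22 * gQL .p22))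
  | p6 : QLRel q (gQL .p22 * gQL .p21) ((q⁻¹ ^ 2) • (gQL .p21 * gQL .p22))
  -- the sixteen cross relations
  | c1 : QLRel q (gQL .p11 * gQL .a11)
      (-((1 - q⁻¹ ^ 2) • (gQL .p12 * gQL .a21)) + (q⁻¹ ^ 2) • (gQL .a11 * gQL .p11)
        + (q⁻¹ ^ 2 - q⁻¹ ^ 4) • (gQL .a12 * gQL .p21))
  | c2 : QLRel q (gQL .p11 * gQL .a12)
      ((q⁻¹ ^ 2 - 1) • (gQL .p12 * gQL .a22) + (q⁻¹ ^ 2) • (gQL .a12 * gQL .p11))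
  | c3 : QLRel q (gQL .p11 * gQL .a21)
      ((1 - q ^ 2) • (gQL .p21 * gQL .a11) - ((q - q⁻¹) ^ 2) • (gQL .p22 * gQL .a21)
        + gQL .a21 * gQL .p11 + (1 - q⁻¹ ^ 2) • (gQL .a22 * gQL .p21))
  | c4 : QLRel q (gQL .p11 * gQL .a22)
      ((1 - q ^ 2) • (gQL .p21 * gQL .a12) - ((q - q⁻¹) ^ 2) • (gQL .p22 * gQL .a22)
        + gQL .a22 * gQL .p11)
  | c5 : QLRel q (gQL .p12 * gQL .a11)
      (gQL .a11 * gQL .p12 + (1 - q⁻¹ ^ 2) • (gQL .a12 * gQL .p22)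
        + (q⁻¹ ^ 2 - 1) • (gQL .a12 * gQL .p11))
  | c6 : QLRel q (gQL .p12 * gQL .a12) ((q⁻¹ ^ 2) • (gQL .a12 * gQL .p12))
  | c7 : QLRel q (gQL .p12 * gQL .a21)
      ((q⁻¹ ^ 2 - 1) • (gQL .p22 * gQL .a11) + gQL .a21 * gQL .p12
        + (q⁻¹ ^ 2 - 1) • (gQL .a22 * gQL .p11) + (1 - q⁻¹ ^ 2) • (gQL .a22 * gQL .p22))
  | c8 : QLRel q (gQL .p12 * gQL .a22)
      ((q⁻¹ ^ 2 - 1) • (gQL .p22 * gQL .a12) + (q⁻¹ ^ 2) • (gQL .a22 * gQL .p12))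
  | c9 : QLRel q (gQL .p21 * gQL .a11)
      ((q⁻¹ ^ 2) • (gQL .a11 * gQL .p21) - (1 - q⁻¹ ^ 2) • (gQL .p22 * gQL .a21))
  | c10 : QLRel q (gQL .p21 * gQL .a12)
      ((q⁻¹ ^ 2 - 1) • (gQL .p22 * gQL .a22) + gQL .a12 * gQL .p21)
  | c11 : QLRel q (gQL .p21 * gQL .a21) ((q⁻¹ ^ 2) • (gQL .a21 * gQL .p21))
  | c12 : QLRel q (gQL .p21 * gQL .a22) (gQL .a22 * gQL .p21)
  | c13 : QLRel q (gQL .p22 * gQL .a11)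
      (gQL .a11 * gQL .p22 + (1 - q ^ 2) • (gQL .a12 * gQL .p21))
  | c14 : QLRel q (gQL .p22 * gQL .a12) (gQL .a12 * gQL .p22)
  | c15 : QLRel q (gQL .p22 * gQL .a21)
      ((q⁻¹ ^ 2) • (gQL .a21 * gQL .p22) + (q⁻¹ ^ 2 - 1) • (gQL .a22 * gQL .p21))
  | c16 : QLRel q (gQL .p22 * gQL .a22) ((q⁻¹ ^ 2) • (gQL .a22 * gQL .p22))

  -- the localization relations: `ai` and `di` are two-sided inverses of
  -- `det_q(A)` and `det_q(D)` respectively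
  | invA1 : QLRel q (gQL .ai * (gQL .a11 * gQL .a22 - (q ^ 2) • (gQL .a12 * gQL .a21))) 1
  | invA2 : QLRel q ((gQL .a11 * gQL .a22 - (q ^ 2) • (gQL .a12 * gQL .a21)) * gQL .ai) 1
  | invD1 : QLRel q (gQL .di * (gQL .p11 * gQL .p22 - (q ^ 2) • (gQL .p12 * gQL .p21))) 1
  | invD2 : QLRel q ((gQL .p11 * gQL .p22 - (q ^ 2) • (gQL .p12 * gQL .p21)) * gQL .di) 1

/-- The algebra `𝒟q⁺(GL₂)` of quantum differential operators on `GL₂`. -/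
abbrev DqLoc (q : ℂ) : Type := RingQuot (QLRel q)

def a11 (q : ℂ) : DqLoc q := RingQuot.mkAlgHom ℂ (QLRel q) (gQL .a11)
def a12 (q : ℂ) : DqLoc q := RingQuot.mkAlgHom ℂ (QLRel q) (gQL .a12)
def a21 (q : ℂ) : DqLoc q := RingQuot.mkAlgHom ℂ (QLRel q) (gQL .a21)
def a22 (q : ℂ) : DqLoc q := RingQuot.mkAlgHom ℂ (QLRel q) (gQL .a22)
def p11 (q : ℂ) : DqLoc q := RingQuot.mkAlgHom ℂ (QLRel q) (gQL .p11)
def p12 (q : ℂ) : DqLoc q := RingQuot.mkAlgHom ℂ (QLRel q) (gQL .p12)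
def p21 (q : ℂ) : DqLoc q := RingQuot.mkAlgHom ℂ (QLRel q) (gQL .p21)
def p22 (q : ℂ) : DqLoc q := RingQuot.mkAlgHom ℂ (QLRel q) (gQL .p22)

/-- The quantum determinant `det_q(A) = a¹₁a²₂ − q²a¹₂a²₁`. -/
def detA (q : ℂ) : DqLoc q := a11 q * a22 q - (q ^ 2) • (a12 q * a21 q)

/-- The quantum determinant `det_q(D) = ∂¹₁∂²₂ − q²∂¹₂∂²₁`. -/
def detD (q : ℂ) : DqLoc q := p11 q * p22 q - (q ^ 2) • (p12 q * p21 q)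

/-- The inverse `det_q(A)⁻¹`. -/
def ai (q : ℂ) : DqLoc q := RingQuot.mkAlgHom ℂ (QLRel q) (gQL .ai)

/-- The inverse `det_q(D)⁻¹`. -/
def di (q : ℂ) : DqLoc q := RingQuot.mkAlgHom ℂ (QLRel q) (gQL .di)

/-- The matrix `A = (a^i_j)`. -/
def Amat (q : ℂ) : Matrix (Fin 2) (Fin 2) (DqLoc q) :=
  !![a11 q, a12 q; a21 q, a22 q]

/-- The matrix `D = (∂^i_j)`. -/
def Dmat (q : ℂ) : Matrix (Fin 2) (Fin 2) (DqLoc q) :=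
  !![p11 q, p12 q; p21 q, p22 q]

/-- The quantum adjugate matrix `Ã = [[a²₂, −q²a¹₂], [−q²a²₁, q²a¹₁ + (1−q²)a²₂]]`. -/
def Atil (q : ℂ) : Matrix (Fin 2) (Fin 2) (DqLoc q) :=
  !![a22 q, -((q ^ 2) • a12 q); -((q ^ 2) • a21 q), (q ^ 2) • a11 q + (1 - q ^ 2) • a22 q]

/-- The quantum adjugate matrix `D̃ = [[∂²₂, −q²∂¹₂], [−q²∂²₁, q²∂¹₁ + (1−q²)∂²₂]]`. -/
def Dtil (q : ℂ) : Matrix (Fin 2) (Fin 2) (DqLoc q) :=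
  !![p22 q, -((q ^ 2) • p12 q); -((q ^ 2) • p21 q), (q ^ 2) • p11 q + (1 - q ^ 2) • p22 q]

/-- The inverse matrix `A⁻¹ = det_q(A)⁻¹·Ã`. -/
def Ainv (q : ℂ) : Matrix (Fin 2) (Fin 2) (DqLoc q) := fun i j => ai q * Atil q i j

/-- The inverse matrix `D⁻¹ = det_q(D)⁻¹·D̃`. -/
def Dinv (q : ℂ) : Matrix (Fin 2) (Fin 2) (DqLoc q) := fun i j => di q * Dtil q i j

/-- Generators of the algebra `ℬ`: `c₁, c₂, c₂⁻¹, d₁, d₂, d₂⁻¹, r, w`. -/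
inductive BGen : Type
  | c1 | c2 | c2i | d1 | d2 | d2i | r | w

abbrev FB : Type := FreeAlgebra ℂ BGen

def gB : BGen → FB := FreeAlgebra.ι ℂ

/-- The defining relations of the algebra `ℬ`. -/
inductive BRel (q : ℂ) : FB → FB → Prop
  | c2c2i : BRel q (gB .c2 * gB .c2i) 1
  | c2ic2 : BRel q (gB .c2i * gB .c2) 1
  | d2d2i : BRel q (gB .d2 * gB .d2i) 1
  | d2id2 : BRel q (gB .d2i * gB .d2) 1
  | c2c1 : BRel q (gB .c2 * gB .c1) (gB .c1 * gB .c2)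
  | d2d1 : BRel q (gB .d2 * gB .d1) (gB .d1 * gB .d2)
  | d2c2 : BRel q (gB .d2 * gB .c2) ((q⁻¹ ^ 4) • (gB .c2 * gB .d2))
  | d2c1 : BRel q (gB .d2 * gB .c1) ((q⁻¹ ^ 2) • (gB .c1 * gB .d2))
  | d1c2 : BRel q (gB .d1 * gB .c2) ((q⁻¹ ^ 2) • (gB .c2 * gB .d1))
  | d1c1 : BRel q (gB .d1 * gB .c1) (gB .c1 * gB .d1 + (q⁻¹ ^ 2 - 1) • gB .r)
  | d2r : BRel q (gB .d2 * gB .r) ((q⁻¹ ^ 2) • (gB .r * gB .d2))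
  | rc2 : BRel q (gB .r * gB .c2) ((q⁻¹ ^ 2) • (gB .c2 * gB .r))
  | d1r : BRel q (gB .d1 * gB .r)
      ((q⁻¹ ^ 2) • (gB .r * gB .d1) + ((1 - q⁻¹ ^ 2) * q⁻¹ ^ 2) • (gB .c1 * gB .d2))
  | rc1 : BRel q (gB .r * gB .c1)
      ((q⁻¹ ^ 2) • (gB .c1 * gB .r) + ((1 - q⁻¹ ^ 2) * q⁻¹ ^ 2) • (gB .c2 * gB .d1))
  | rr : BRel q (gB .r * gB .r)
      ((q⁻¹ ^ 4) • gB .w + (q⁻¹ ^ 4 + q⁻¹ ^ 6) • (gB .c2 * gB .d2)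
        - (q⁻¹ ^ 4) • (gB .c2 * gB .d1 * gB .d1)
        - (q⁻¹ ^ 4) • (gB .c1 * gB .c1 * gB .d2)
        + (q⁻¹ ^ 2) • (gB .c1 * gB .r * gB .d1))
  | wr : BRel q (gB .w * gB .r) (gB .r * gB .w)
  | wc1 : BRel q (gB .w * gB .c1) ((q⁻¹ ^ 2) • (gB .c1 * gB .w))
  | wc2 : BRel q (gB .w * gB .c2) ((q⁻¹ ^ 4) • (gB .c2 * gB .w))
  | wd1 : BRel q (gB .w * gB .d1) ((q ^ 2) • (gB .d1 * gB .w))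
  | wd2 : BRel q (gB .w * gB .d2) ((q ^ 4) • (gB .d2 * gB .w))

/-- The algebra `ℬ`. -/
abbrev AlgB (q : ℂ) : Type := RingQuot (BRel q)

def bc1 (q : ℂ) : AlgB q := RingQuot.mkAlgHom ℂ (BRel q) (gB .c1)
def bc2 (q : ℂ) : AlgB q := RingQuot.mkAlgHom ℂ (BRel q) (gB .c2)
def bc2i (q : ℂ) : AlgB q := RingQuot.mkAlgHom ℂ (BRel q) (gB .c2i)
def bd1 (q : ℂ) : AlgB q := RingQuot.mkAlgHom ℂ (BRel q) (gB .d1)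
def bd2 (q : ℂ) : AlgB q := RingQuot.mkAlgHom ℂ (BRel q) (gB .d2)
def bd2i (q : ℂ) : AlgB q := RingQuot.mkAlgHom ℂ (BRel q) (gB .d2i)
def br (q : ℂ) : AlgB q := RingQuot.mkAlgHom ℂ (BRel q) (gB .r)
def bw (q : ℂ) : AlgB q := RingQuot.mkAlgHom ℂ (BRel q) (gB .w)

/-- `c₁ := tr_q(A) = a¹₁ + q⁻²a²₂`. -/
def c1El (q : ℂ) : DqLoc q := a11 q + (q⁻¹ ^ 2) • a22 q
/-- `c₂ := det_q(A)`. -/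
def c2El (q : ℂ) : DqLoc q := detA q
/-- `d₁ := tr_q(D) = ∂¹₁ + q⁻²∂²₂`. -/
def d1El (q : ℂ) : DqLoc q := p11 q + (q⁻¹ ^ 2) • p22 q
/-- `d₂ := det_q(D)`. -/
def d2El (q : ℂ) : DqLoc q := detD q
/-- `r := q²·tr_q(DA)`. -/
def rEl (q : ℂ) : DqLoc q :=
  (q ^ 2) • ((Dmat q * Amat q) 0 0 + (q⁻¹ ^ 2) • (Dmat q * Amat q) 1 1)
/-- `w := tr_q(DÃD̃A)`. -/
def wEl (q : ℂ) : DqLoc q :=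
  (Dmat q * Atil q * Dtil q * Amat q) 0 0
    + (q⁻¹ ^ 2) • (Dmat q * Atil q * Dtil q * Amat q) 1 1

set_option linter.unusedSimpArgs false
set_option maxHeartbeats 4000000

structure NRels {R : Type*} [Ring R] [Algebra ℂ R] (u v : ℂ) (a b c d x y z t : R) : Prop where
  huv : u * v = 1
  ba : b * a = (a * b) + (1 + (-1)*u) • (b * d)
  da : d * a = (a * d)
  ca : c * a = (a * c) + ((-1)*u + u^2) • (c * d)
  db : d * b = (v) • (b * d)
  cb : c * b = (b * c) + (1 + (-1)*u) • (a * d) + ((-1)*1 + u) • (d * d)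
  dc : d * c = (u) • (c * d)
  yx : y * x = (x * y) + (1 + (-1)*u) • (y * t)
  tx : t * x = (x * t)
  zx : z * x = (x * z) + ((-1)*u + u^2) • (z * t)
  ty : t * y = (v) • (y * t)
  zy : z * y = (y * z) + (1 + (-1)*u) • (x * t) + ((-1)*1 + u) • (t * t)
  tz : t * z = (u) • (z * t)
  xa : x * a = (u) • (a * x) + ((-1)*v + (3)*1 + (-2)*u) • (b * z) + ((-1)*1 + u) • (c * y) + (1 + (-2)*u + u^2) • (d * x) + ((-1)*1 + (2)*u + (-1)*u^2) • (d * t) + (1 + (-2)*u + u^2) • (a * t)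
  xb : x * b = (u) • (b * x) + ((-1)*u + u^2) • (d * y) + (1 + (-2)*u + u^2) • (b * t)
  xc : x * c = (c * x) + (1 + (-1)*u) • (d * z) + ((-1)*1 + u) • (a * z)
  xd : x * d = (d * x) + ((-1)*v + 1) • (b * z)
  ya : y * a = (a * y) + (1 + (-1)*u) • (b * t) + ((-1)*1 + u) • (b * x)
  yb : y * b = (u) • (b * y)
  yc : y * c = (c * y) + ((-1)*1 + u) • (d * x) + (1 + (-1)*u) • (d * t) + ((-1)*1 + u) • (a * t) + (v + (-2)*1 + u) • (b * z)
  yd : y * d = (u) • (d * y) + ((-1)*1 + u) • (b * t)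
  za : z * a = (u) • (a * z) + ((-1)*u + u^2) • (c * t) + (1 + (-2)*u + u^2) • (d * z)
  zb : z * b = (b * z) + ((-1)*u + u^2) • (d * t)
  zc : z * c = (u) • (c * z)
  zd : z * d = (d * z)
  ta : t * a = (a * t) + ((-1)*v + 1) • (b * z)
  tb : t * b = (b * t)
  tc : t * c = (u) • (c * t) + ((-1)*1 + u) • (d * z)
  td : t * d = (u) • (d * t)

theorem asl {R : Type*} [Ring R] {x a s : R} (h : x * a = s) (e : R) : x * (a * e) = s * e := by
  rw [← mul_assoc, h]

theorem q_dets {R : Type*} [Ring R] [Algebra ℂ R] {u v : ℂ} {a b c d x y z t : R} (h : NRels u v a b c d x y z t) :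
    a * (a * d - v • (b * c)) = (a * d - v • (b * c)) * a ∧
    b * (a * d - v • (b * c)) = (a * d - v • (b * c)) * b ∧
    c * (a * d - v • (b * c)) = (a * d - v • (b * c)) * c ∧
    d * (a * d - v • (b * c)) = (a * d - v • (b * c)) * d ∧
    (x * t - v • (y * z)) * a = u • (a * (x * t - v • (y * z))) ∧
    (x * t - v • (y * z)) * b = u • (b * (x * t - v • (y * z))) ∧
    (x * t - v • (y * z)) * c = u • (c * (x * t - v • (y * z))) ∧
    (x * t - v • (y * z)) * d = u • (d * (x * t - v • (y * z))) ∧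
    (x * t - v • (y * z)) * x = x * (x * t - v • (y * z)) ∧
    (x * t - v • (y * z)) * y = y * (x * t - v • (y * z)) ∧
    (x * t - v • (y * z)) * z = z * (x * t - v • (y * z)) ∧
    (x * t - v • (y * z)) * t = t * (x * t - v • (y * z)) ∧
    x * (a * d - v • (b * c)) = u • ((a * d - v • (b * c)) * x) ∧
    y * (a * d - v • (b * c)) = u • ((a * d - v • (b * c)) * y) ∧
    z * (a * d - v • (b * c)) = u • ((a * d - v • (b * c)) * z) ∧
    t * (a * d - v • (b * c)) = u • ((a * d - v • (b * c)) * t) := by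
  have huv := h.huv
  refine ⟨?_, ?_, ?_, ?_, ?_, ?_, ?_, ?_, ?_, ?_, ?_, ?_, ?_, ?_, ?_, ?_⟩ <;>
  · simp only [mul_assoc, mul_add, add_mul, mul_sub, sub_mul, mul_neg, neg_mul, smul_mul_assoc, mul_smul_comm, smul_add, smul_sub, smul_neg, smul_smul, h.ba, asl h.ba, h.da, asl h.da, h.ca, asl h.ca, h.db, asl h.db, h.cb, asl h.cb, h.dc, asl h.dc, h.yx, asl h.yx, h.tx, asl h.tx, h.zx, asl h.zx, h.ty, asl h.ty, h.zy, asl h.zy, h.tz, asl h.tz, h.xa, asl h.xa, h.xb, asl h.xb, h.xc, asl h.xc, h.xd, asl h.xd, h.ya, asl h.ya, h.yb, asl h.yb, h.yc, asl h.yc, h.yd, asl h.yd, h.za, asl h.za, h.zb, asl h.zb, h.zc, asl h.zc, h.zd, asl h.zd, h.ta, asl h.ta, h.tb, asl h.tb, h.tc, asl h.tc, h.td, asl h.td]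
    match_scalars <;> grind

theorem q_low {R : Type*} [Ring R] [Algebra ℂ R] {u v : ℂ} {a b c d x y z t : R} (h : NRels u v a b c d x y z t) :
    (x + u • t) * (a + u • d) = (a + u • d) * (x + u • t) + (u - 1) • (v • (x * a + y * c + u • (z * b + t * d))) ∧
    (x + u • t) * (v • (x * a + y * c + u • (z * b + t * d))) = u • ((v • (x * a + y * c + u • (z * b + t * d))) * (x + u • t)) + ((1 - u) * u) • ((a + u • d) * (x * t - v • (y * z))) ∧
    (v • (x * a + y * c + u • (z * b + t * d))) * (a + u • d) = u • ((a + u • d) * (v • (x * a + y * c + u • (z * b + t * d)))) + ((1 - u) * u) • ((a * d - v • (b * c)) * (x + u • t)) := by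
  have huv := h.huv
  refine ⟨?_, ?_, ?_⟩ <;>
  · simp only [mul_assoc, mul_add, add_mul, mul_sub, sub_mul, mul_neg, neg_mul, smul_mul_assoc, mul_smul_comm, smul_add, smul_sub, smul_neg, smul_smul, h.ba, asl h.ba, h.da, asl h.da, h.ca, asl h.ca, h.db, asl h.db, h.cb, asl h.cb, h.dc, asl h.dc, h.yx, asl h.yx, h.tx, asl h.tx, h.zx, asl h.zx, h.ty, asl h.ty, h.zy, asl h.zy, h.tz, asl h.tz, h.xa, asl h.xa, h.xb, asl h.xb, h.xc, asl h.xc, h.xd, asl h.xd, h.ya, asl h.ya, h.yb, asl h.yb, h.yc, asl h.yc, h.yd, asl h.yd, h.za, asl h.za, h.zb, asl h.zb, h.zc, asl h.zc, h.zd, asl h.zd, h.ta, asl h.ta, h.tb, asl h.tb, h.tc, asl h.tc, h.td, asl h.td]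
    match_scalars <;> grind

theorem nfs {R : Type*} [Ring R] [Algebra ℂ R] {u v : ℂ} {a b c d x y z t : R} (h : NRels u v a b c d x y z t) :
    (x * d + y * -(v • c)) = (v) • (d * x) + ((-1)*v^2 + v) • (b * z) + ((-1)*v) • (c * y) + ((-1)*v + 1) • (d * t) + (v + (-1)*1) • (a * t) ∧
    (x * -(v • b) + y * (v • a + (1 - v) • d)) = ((-1)*v) • (b * x) + (v + (-1)*1) • (b * t) + (v) • (a * y) ∧
    (z * d + t * -(v • c)) = (v) • (d * z) + ((-1)*1) • (c * t) ∧
    (z * -(v • b) + t * (v • a + (1 - v) • d)) = ((-1)*v^2) • (b * z) + (v) • (a * t) ∧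
    (t * a + -(v • y) * c) = (v) • (a * t) + ((-1)*v^2 + v) • (b * z) + ((-1)*v) • (c * y) + (v + (-1)*1) • (d * x) + ((-1)*v + 1) • (d * t) ∧
    (t * b + -(v • y) * d) = (v) • (b * t) + ((-1)*1) • (d * y) ∧
    (-(v • z) * a + (v • x + (1 - v) • t) * c) = ((-1)*v) • (a * z) + (v + (-1)*1) • (d * z) + (v) • (c * x) ∧
    (-(v • z) * b + (v • x + (1 - v) • t) * d) = ((-1)*v^2) • (b * z) + (v) • (d * x) ∧
    (v • (x * a + y * c + u • (z * b + t * d))) = (a * x) + (v) • (b * z) + (c * y) + ((-1)*1 + u) • (d * x) + (1 + (-1)*u + u^2) • (d * t) + ((-1)*1 + u) • (a * t) := by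
  have huv := h.huv
  refine ⟨?_, ?_, ?_, ?_, ?_, ?_, ?_, ?_, ?_⟩ <;>
  · simp only [mul_assoc, mul_add, add_mul, mul_sub, sub_mul, mul_neg, neg_mul, smul_mul_assoc, mul_smul_comm, smul_add, smul_sub, smul_neg, smul_smul, h.ba, asl h.ba, h.da, asl h.da, h.ca, asl h.ca, h.db, asl h.db, h.cb, asl h.cb, h.dc, asl h.dc, h.yx, asl h.yx, h.tx, asl h.tx, h.zx, asl h.zx, h.ty, asl h.ty, h.zy, asl h.zy, h.tz, asl h.tz, h.xa, asl h.xa, h.xb, asl h.xb, h.xc, asl h.xc, h.xd, asl h.xd, h.ya, asl h.ya, h.yb, asl h.yb, h.yc, asl h.yc, h.yd, asl h.yd, h.za, asl h.za, h.zb, asl h.zb, h.zc, asl h.zc, h.zd, asl h.zd, h.ta, asl h.ta, h.tb, asl h.tb, h.tc, asl h.tc, h.td, asl h.td]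
    match_scalars <;> grind

theorem q_rr {R : Type*} [Ring R] [Algebra ℂ R] {u v : ℂ} {a b c d x y z t : R} (h : NRels u v a b c d x y z t) :
    (v • (x * a + y * c + u • (z * b + t * d))) * (v • (x * a + y * c + u • (z * b + t * d))) = (u^2) • ((x * d + y * -(v • c)) * (t * a + -(v • y) * c) + (x * -(v • b) + y * (v • a + (1 - v) • d)) * (-(v • z) * a + (v • x + (1 - v) • t) * c) + u • ((z * d + t * -(v • c)) * (t * b + -(v • y) * d) + (z * -(v • b) + t * (v • a + (1 - v) • d)) * (-(v • z) * b + (v • x + (1 - v) • t) * d))) + (u^2 + u^3) • ((a * d - v • (b * c)) * (x * t - v • (y * z))) - (u^2) • ((a * d - v • (b * c)) * (x + u • t) * (x + u • t))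
      - (u^2) • ((a + u • d) * (a + u • d) * (x * t - v • (y * z))) + u • ((a + u • d) * (v • (x * a + y * c + u • (z * b + t * d))) * (x + u • t)) := by
  have huv := h.huv
  obtain ⟨h1, h2, h3, h4, h5, h6, h7, h8, h9⟩ := nfs h
  rw [h1, h2, h3, h4, h5, h6, h7, h8, h9]
  simp only [mul_assoc, mul_add, add_mul, mul_sub, sub_mul, mul_neg, neg_mul, smul_mul_assoc, mul_smul_comm, smul_add, smul_sub, smul_neg, smul_smul, h.ba, asl h.ba, h.da, asl h.da, h.ca, asl h.ca, h.db, asl h.db, h.cb, asl h.cb, h.dc, asl h.dc, h.yx, asl h.yx, h.tx, asl h.tx, h.zx, asl h.zx, h.ty, asl h.ty, h.zy, asl h.zy, h.tz, asl h.tz, h.xa, asl h.xa, h.xb, asl h.xb, h.xc, asl h.xc, h.xd, asl h.xd, h.ya, asl h.ya, h.yb, asl h.yb, h.yc, asl h.yc, h.yd, asl h.yd, h.za, asl h.za, h.zb, asl h.zb, h.zc, asl h.zc, h.zd, asl h.zd, h.ta, asl h.ta, h.tb, asl h.tb, h.tc, asl h.tc, h.td, asl h.td]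
  match_scalars <;> grind

theorem q_mid {R : Type*} [Ring R] [Algebra ℂ R] {u v : ℂ} {a b c d x y z t : R} (h : NRels u v a b c d x y z t) :
    (a * d - v • (b * c)) * (a + u • d) = (a + u • d) * (a * d - v • (b * c)) ∧ (x * t - v • (y * z)) * (x + u • t) = (x + u • t) * (x * t - v • (y * z)) ∧
    (x * t - v • (y * z)) * (a * d - v • (b * c)) = (u^2) • ((a * d - v • (b * c)) * (x * t - v • (y * z))) ∧
    (x * t - v • (y * z)) * (a + u • d) = u • ((a + u • d) * (x * t - v • (y * z))) ∧
    (x + u • t) * (a * d - v • (b * c)) = u • ((a * d - v • (b * c)) * (x + u • t)) ∧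
    (x * t - v • (y * z)) * (v • (x * a + y * c + u • (z * b + t * d))) = u • ((v • (x * a + y * c + u • (z * b + t * d))) * (x * t - v • (y * z))) ∧
    (v • (x * a + y * c + u • (z * b + t * d))) * (a * d - v • (b * c)) = u • ((a * d - v • (b * c)) * (v • (x * a + y * c + u • (z * b + t * d)))) := by
  obtain ⟨h1, h2, h3, h4, h5, h6, h7, h8, h9, h10, h11, h12, h13, h14, h15, h16⟩ := q_dets h
  generalize hC : (a * d - v • (b * c)) = C at *
  generalize hD : (x * t - v • (y * z)) = D at *
  refine ⟨?_, ?_, ?_, ?_, ?_, ?_, ?_⟩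
  · simp only [mul_add, add_mul, smul_mul_assoc, mul_smul_comm, h1, h4]
  · simp only [mul_add, add_mul, smul_mul_assoc, mul_smul_comm, h9, h12]
  · simp only [← hC, mul_assoc, mul_sub, sub_mul, smul_mul_assoc, mul_smul_comm, h5, h6, h7, h8, asl h5, asl h6, asl h7, asl h8]
    module
  · simp only [mul_add, add_mul, smul_mul_assoc, mul_smul_comm, h5, h8]
    module
  · simp only [mul_add, add_mul, smul_mul_assoc, mul_smul_comm, h13, h16]
    module
  · simp only [mul_assoc, mul_add, add_mul, smul_mul_assoc, mul_smul_comm, h5, h6, h7, h8, asl h9, asl h10, asl h11, asl h12]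
    module
  · simp only [mul_assoc, mul_add, add_mul, smul_mul_assoc, mul_smul_comm, h1, h2, h3, h4, asl h13, asl h14, asl h15, asl h16]
    module

theorem q_w {R : Type*} [Ring R] [Algebra ℂ R] {u v : ℂ} {c1 c2 d1 d2 r w : R} (huv : u * v = 1)
    (h1 : c2 * c1 = c1 * c2) (h2 : d2 * d1 = d1 * d2) (h3 : d2 * c2 = (u^2) • (c2 * d2))
    (h4 : d2 * c1 = u • (c1 * d2)) (h5 : d1 * c2 = u • (c2 * d1))
    (h6 : d1 * c1 = c1 * d1 + (u - 1) • r) (h7 : d2 * r = u • (r * d2)) (h8 : r * c2 = u • (c2 * r))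
    (h9 : d1 * r = u • (r * d1) + ((1 - u) * u) • (c1 * d2))
    (h10 : r * c1 = u • (c1 * r) + ((1 - u) * u) • (c2 * d1))
    (h11 : r * r = (u^2) • w + (u^2 + u^3) • (c2 * d2) - (u^2) • (c2 * d1 * d1)
      - (u^2) • (c1 * c1 * d2) + u • (c1 * r * d1)) :
    w * r = r * w ∧ w * c1 = u • (c1 * w) ∧ w * c2 = (u^2) • (c2 * w) ∧
    w * d1 = v • (d1 * w) ∧ w * d2 = (v^2) • (d2 * w) := by
  have hw : w = (v^2) • (r * r - (u^2 + u^3) • (c2 * d2) + (u^2) • (c2 * d1 * d1)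
      + (u^2) • (c1 * c1 * d2) - u • (c1 * r * d1)) := by
    rw [h11]
    match_scalars <;> grind
  clear h11
  subst hw
  refine ⟨?_, ?_, ?_, ?_, ?_⟩ <;>
  · simp only [mul_assoc, mul_add, add_mul, mul_sub, sub_mul, mul_neg, neg_mul, smul_mul_assoc, mul_smul_comm, smul_add, smul_sub, smul_neg, smul_smul, h1, asl h1, h2, asl h2, h3, asl h3, h4, asl h4, h5, asl h5, h6, asl h6,
      h7, asl h7, h8, asl h8, h9, asl h9, h10, asl h10]
    match_scalars <;> grind

theorem q_nrels (q : ℂ) (hq : q ≠ 0) : NRels (q⁻¹ ^ 2) (q ^ 2) (a11 q) (a12 q) (a21 q) (a22 q) (p11 q) (p12 q) (p21 q) (p22 q) := by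
  have a1' := RingQuot.mkAlgHom_rel ℂ (QLRel.a1 (q := q))
  have a2' := RingQuot.mkAlgHom_rel ℂ (QLRel.a2 (q := q))
  have a3' := RingQuot.mkAlgHom_rel ℂ (QLRel.a3 (q := q))
  have a4' := RingQuot.mkAlgHom_rel ℂ (QLRel.a4 (q := q))
  have a5' := RingQuot.mkAlgHom_rel ℂ (QLRel.a5 (q := q))
  have a6' := RingQuot.mkAlgHom_rel ℂ (QLRel.a6 (q := q))
  have p1' := RingQuot.mkAlgHom_rel ℂ (QLRel.p1 (q := q))
  have p2' := RingQuot.mkAlgHom_rel ℂ (QLRel.p2 (q := q))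
  have p3' := RingQuot.mkAlgHom_rel ℂ (QLRel.p3 (q := q))
  have p4' := RingQuot.mkAlgHom_rel ℂ (QLRel.p4 (q := q))
  have p5' := RingQuot.mkAlgHom_rel ℂ (QLRel.p5 (q := q))
  have p6' := RingQuot.mkAlgHom_rel ℂ (QLRel.p6 (q := q))
  have c1' := RingQuot.mkAlgHom_rel ℂ (QLRel.c1 (q := q))
  have c2' := RingQuot.mkAlgHom_rel ℂ (QLRel.c2 (q := q))
  have c3' := RingQuot.mkAlgHom_rel ℂ (QLRel.c3 (q := q))
  have c4' := RingQuot.mkAlgHom_rel ℂ (QLRel.c4 (q := q))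
  have c5' := RingQuot.mkAlgHom_rel ℂ (QLRel.c5 (q := q))
  have c6' := RingQuot.mkAlgHom_rel ℂ (QLRel.c6 (q := q))
  have c7' := RingQuot.mkAlgHom_rel ℂ (QLRel.c7 (q := q))
  have c8' := RingQuot.mkAlgHom_rel ℂ (QLRel.c8 (q := q))
  have c9' := RingQuot.mkAlgHom_rel ℂ (QLRel.c9 (q := q))
  have c10' := RingQuot.mkAlgHom_rel ℂ (QLRel.c10 (q := q))
  have c11' := RingQuot.mkAlgHom_rel ℂ (QLRel.c11 (q := q))
  have c12' := RingQuot.mkAlgHom_rel ℂ (QLRel.c12 (q := q))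
  have c13' := RingQuot.mkAlgHom_rel ℂ (QLRel.c13 (q := q))
  have c14' := RingQuot.mkAlgHom_rel ℂ (QLRel.c14 (q := q))
  have c15' := RingQuot.mkAlgHom_rel ℂ (QLRel.c15 (q := q))
  have c16' := RingQuot.mkAlgHom_rel ℂ (QLRel.c16 (q := q))
  simp only [map_mul, map_add, map_sub, map_neg, map_smul] at a1' a2' a3' a4' a5' a6' p1' p2' p3' p4' p5' p6' c1' c2' c3' c4' c5' c6' c7' c8' c9' c10' c11' c12' c13' c14' c15' c16'
  have Ea11 : RingQuot.mkAlgHom ℂ (QLRel q) (gQL .a11) = a11 q := rfl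
  have Ea12 : RingQuot.mkAlgHom ℂ (QLRel q) (gQL .a12) = a12 q := rfl
  have Ea21 : RingQuot.mkAlgHom ℂ (QLRel q) (gQL .a21) = a21 q := rfl
  have Ea22 : RingQuot.mkAlgHom ℂ (QLRel q) (gQL .a22) = a22 q := rfl
  have Ep11 : RingQuot.mkAlgHom ℂ (QLRel q) (gQL .p11) = p11 q := rfl
  have Ep12 : RingQuot.mkAlgHom ℂ (QLRel q) (gQL .p12) = p12 q := rfl
  have Ep21 : RingQuot.mkAlgHom ℂ (QLRel q) (gQL .p21) = p21 q := rfl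
  have Ep22 : RingQuot.mkAlgHom ℂ (QLRel q) (gQL .p22) = p22 q := rfl
  simp only [Ea11, Ea12, Ea21, Ea22, Ep11, Ep12, Ep21, Ep22] at a1' a2' a3' a4' a5' a6' p1' p2' p3' p4' p5' p6' c1' c2' c3' c4' c5' c6' c7' c8' c9' c10' c11' c12' c13' c14' c15' c16'
  have huv : q⁻¹ ^ 2 * q ^ 2 = 1 := by field_simp
  have e1 : q⁻¹ ^ 4 = (q⁻¹ ^ 2) ^ 2 := by ring
  have e2 : (q - q⁻¹) ^ 2 = q ^ 2 - 2 + q⁻¹ ^ 2 := by field_simp; ring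
  rw [e1] at c1'
  rw [e2] at c3' c4'
  generalize q⁻¹ ^ 2 = u at *
  generalize q ^ 2 = v at *
  constructor
  · exact huv
  all_goals
    simp only [a1', a2', a3', a4', a5', a6', p1', p2', p3', p4', p5', p6', c1', c2', c3', c4', c5', c6', c7', c8', c9', c10', c11', c12', c13', c14', c15', c16', smul_add, smul_sub, smul_neg, smul_smul] <;>
    match_scalars <;> grind

/-- The elements `c₁ = tr_q(A)`, `c₂ = det_q(A)`, `d₁ = tr_q(D)`,
`d₂ = det_q(D)`, `r = q²·tr_q(DA)` and `w = tr_q(DÃD̃A)` of `𝒟q(GL₂)`, with `c₂`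
and `d₂` invertible there, satisfy all sixteen defining relations of `ℬ`;
consequently there is a ℂ-algebra homomorphism `Ψ̄ : ℬ → 𝒟q(GL₂)` sending the
generators `c₁, c₂, c₂⁻¹, d₁, d₂, d₂⁻¹, r, w` to these elements. -/
theorem stmt16 (q : ℂ) (hq : q ≠ 0) :
    (c2El q * ai q = 1 ∧ ai q * c2El q = 1 ∧
     d2El q * di q = 1 ∧ di q * d2El q = 1 ∧
     c2El q * c1El q = c1El q * c2El q ∧
     d2El q * d1El q = d1El q * d2El q ∧
     d2El q * c2El q = (q⁻¹ ^ 4) • (c2El q * d2El q) ∧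
     d2El q * c1El q = (q⁻¹ ^ 2) • (c1El q * d2El q) ∧
     d1El q * c2El q = (q⁻¹ ^ 2) • (c2El q * d1El q) ∧
     d1El q * c1El q = c1El q * d1El q + (q⁻¹ ^ 2 - 1) • rEl q ∧
     d2El q * rEl q = (q⁻¹ ^ 2) • (rEl q * d2El q) ∧
     rEl q * c2El q = (q⁻¹ ^ 2) • (c2El q * rEl q) ∧
     d1El q * rEl q
       = (q⁻¹ ^ 2) • (rEl q * d1El q) + ((1 - q⁻¹ ^ 2) * q⁻¹ ^ 2) • (c1El q * d2El q) ∧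
     rEl q * c1El q
       = (q⁻¹ ^ 2) • (c1El q * rEl q) + ((1 - q⁻¹ ^ 2) * q⁻¹ ^ 2) • (c2El q * d1El q) ∧
     rEl q * rEl q
       = (q⁻¹ ^ 4) • wEl q + (q⁻¹ ^ 4 + q⁻¹ ^ 6) • (c2El q * d2El q)
         - (q⁻¹ ^ 4) • (c2El q * d1El q * d1El q)
         - (q⁻¹ ^ 4) • (c1El q * c1El q * d2El q)
         + (q⁻¹ ^ 2) • (c1El q * rEl q * d1El q) ∧
     wEl q * rEl q = rEl q * wEl q ∧
     wEl q * c1El q = (q⁻¹ ^ 2) • (c1El q * wEl q) ∧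
     wEl q * c2El q = (q⁻¹ ^ 4) • (c2El q * wEl q) ∧
     wEl q * d1El q = (q ^ 2) • (d1El q * wEl q) ∧
     wEl q * d2El q = (q ^ 4) • (d2El q * wEl q)) ∧
    ∃ Ψ : AlgB q →ₐ[ℂ] DqLoc q,
      Ψ (bc1 q) = c1El q ∧ Ψ (bc2 q) = c2El q ∧ Ψ (bc2i q) = ai q ∧
      Ψ (bd1 q) = d1El q ∧ Ψ (bd2 q) = d2El q ∧ Ψ (bd2i q) = di q ∧
      Ψ (br q) = rEl q ∧ Ψ (bw q) = wEl q := by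
  have hN := q_nrels q hq
  have huv := hN.huv
  obtain ⟨m1, m2, m3, m4, m5, m6, m7⟩ := q_mid hN
  obtain ⟨l1, l2, l3⟩ := q_low hN
  have hrr := q_rr hN
  have e4 : q⁻¹ ^ 4 = (q⁻¹ ^ 2) ^ 2 := by ring
  have e6 : q⁻¹ ^ 6 = (q⁻¹ ^ 2) ^ 3 := by ring
  have f4 : q ^ 4 = (q ^ 2) ^ 2 := by ring
  have hr : rEl q = (q ^ 2) • (p11 q * a11 q + p12 q * a21 q + (q⁻¹ ^ 2) • (p21 q * a12 q + p22 q * a22 q)) := by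
    simp [rEl, Dmat, Amat, Matrix.mul_apply, Fin.sum_univ_two]
  have hw : wEl q = ((p11 q * a22 q + p12 q * -((q ^ 2) • a21 q)) * (p22 q * a11 q + -((q ^ 2) • p12 q) * a21 q) + (p11 q * -((q ^ 2) • a12 q) + p12 q * ((q ^ 2) • a11 q + (1 - (q ^ 2)) • a22 q)) * (-((q ^ 2) • p21 q) * a11 q + ((q ^ 2) • p11 q + (1 - (q ^ 2)) • p22 q) * a21 q) + (q⁻¹ ^ 2) • ((p21 q * a22 q + p22 q * -((q ^ 2) • a21 q)) * (p22 q * a12 q + -((q ^ 2) • p12 q) * a22 q) + (p21 q * -((q ^ 2) • a12 q) + p22 q * ((q ^ 2) • a11 q + (1 - (q ^ 2)) • a22 q)) * (-((q ^ 2) • p21 q) * a12 q + ((q ^ 2) • p11 q + (1 - (q ^ 2)) • p22 q) * a22 q))) := by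
    rw [wEl, Matrix.mul_assoc (Dmat q * Atil q)]
    simp only [Matrix.mul_apply, Fin.sum_univ_two]
    simp [Dmat, Amat, Atil, Dtil]
  have hc1 : c1El q = a11 q + (q⁻¹ ^ 2) • a22 q := rfl
  have hc2 : c2El q = a11 q * a22 q - (q ^ 2) • (a12 q * a21 q) := rfl
  have hd1 : d1El q = p11 q + (q⁻¹ ^ 2) • p22 q := rfl
  have hd2 : d2El q = p11 q * p22 q - (q ^ 2) • (p12 q * p21 q) := rfl
  rw [← hr] at hrr l1 l2 l3 m6 m7
  rw [← hw] at hrr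
  simp only [← hc1, ← hc2, ← hd1, ← hd2] at hrr l1 l2 l3 m1 m2 m3 m4 m5 m6 m7
  obtain ⟨w1, w2, w3, w4, w5⟩ := q_w huv m1 m2 m3 m4 m5 l1 m6 m7 l2 l3 hrr
  have i1 : c2El q * ai q = 1 := by
    have := RingQuot.mkAlgHom_rel ℂ (QLRel.invA2 (q := q))
    simpa only [map_mul, map_sub, map_smul, map_one, c2El, d2El, detA, detD, a11, a12, a21, a22, p11, p12, p21, p22, ai, di] using this
  have i2 : ai q * c2El q = 1 := by
    have := RingQuot.mkAlgHom_rel ℂ (QLRel.invA1 (q := q))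
    simpa only [map_mul, map_sub, map_smul, map_one, c2El, d2El, detA, detD, a11, a12, a21, a22, p11, p12, p21, p22, ai, di] using this
  have i3 : d2El q * di q = 1 := by
    have := RingQuot.mkAlgHom_rel ℂ (QLRel.invD2 (q := q))
    simpa only [map_mul, map_sub, map_smul, map_one, c2El, d2El, detA, detD, a11, a12, a21, a22, p11, p12, p21, p22, ai, di] using this
  have i4 : di q * d2El q = 1 := by
    have := RingQuot.mkAlgHom_rel ℂ (QLRel.invD1 (q := q))
    simpa only [map_mul, map_sub, map_smul, map_one, c2El, d2El, detA, detD, a11, a12, a21, a22, p11, p12, p21, p22, ai, di] using this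
  rw [← e4] at m3 hrr w3
  rw [← e6] at hrr
  rw [← f4] at w5
  refine ⟨⟨i1, i2, i3, i4, m1, m2, m3, m4, m5, l1, m6, m7, l2, l3, hrr, w1, w2, w3, w4, w5⟩, ?_⟩
  let f : BGen → DqLoc q := fun g => match g with
    | .c1 => c1El q | .c2 => c2El q | .c2i => ai q | .d1 => d1El q
    | .d2 => d2El q | .d2i => di q | .r => rEl q | .w => wEl q
  have hf : ∀ g, FreeAlgebra.lift ℂ f (gB g) = f g := fun g => FreeAlgebra.lift_ι_apply f g
  have key : ∀ ⦃x y : FB⦄, BRel q x y → FreeAlgebra.lift ℂ f x = FreeAlgebra.lift ℂ f y := by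
    intro x y hxy
    cases hxy <;> simp only [map_mul, map_add, map_sub, map_smul, map_one, hf]
    exacts [i1, i2, i3, i4, m1, m2, m3, m4, m5, l1, m6, m7, l2, l3, hrr, w1, w2, w3, w4, w5]
  have hl : ∀ g, RingQuot.liftAlgHom ℂ ⟨FreeAlgebra.lift ℂ f, key⟩ (RingQuot.mkAlgHom ℂ (BRel q) (gB g)) = f g := by
    intro g
    rw [RingQuot.liftAlgHom_mkAlgHom_apply, hf]
  exact ⟨RingQuot.liftAlgHom ℂ ⟨FreeAlgebra.lift ℂ f, key⟩, hl .c1, hl .c2, hl .c2i, hl .d1, hl .d2, hl .d2i, hl .r, hl .w⟩
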